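/- Let (X_n, p_{n+1}) be a tower of fibrations of pointed spaces with a chosen basepoint of lim_n X_n, and let k ≥ 0. Then the function φ̃ : Ker P → lim¹_n π_{k+1}X_n is injective: if α, ᾱ : I^k → lim_n X_n send ∂I^k to the basepoint, their classes lie in the kernel of P : π_k(lim_n X_n) → lim_n π_k X_n, and φ̃([α]) = φ̃([ᾱ]) in lim¹_n π_{k+1}X_n, then α and ᾱ are homotopic relative to ∂I^k, i.e., [α] = [ᾱ] in π_k(lim_n X_n). -/

import Mathlib

open scoped unitInterval Topology Topology.Homotopy

noncomputable section

/-- A map is a *Serre fibration* if it has the homotopy lifting property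
with respect to all cubes `I^k`. -/
def IsSerreFibration {E B : Type} [TopologicalSpace E] [TopologicalSpace B]
    (p : C(E, B)) : Prop :=
  ∀ (k : ℕ) (f : C((Fin k → I), E)) (H : C(I × (Fin k → I), B)),
    (∀ q, H (0, q) = p (f q)) →
      ∃ G : C(I × (Fin k → I), E),
        (∀ q, G (0, q) = f q) ∧ ∀ z, p (G z) = H z

/-- The inverse limit of a tower of spaces. -/
def TowerLim (X : ℕ → Type) [∀ n, TopologicalSpace (X n)]
    (p : ∀ n, C(X (n + 1), X n)) : Type :=
  { z : ∀ n, X n // ∀ n, p n (z (n + 1)) = z n }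

instance {X : ℕ → Type} [∀ n, TopologicalSpace (X n)] (p : ∀ n, C(X (n + 1), X n)) :
    TopologicalSpace (TowerLim X p) :=
  instTopologicalSpaceSubtype

/-- The projection from the inverse limit of a tower to the `n`th space. -/
def TowerLim.proj {X : ℕ → Type} [∀ n, TopologicalSpace (X n)]
    {p : ∀ n, C(X (n + 1), X n)} (n : ℕ) : C(TowerLim X p, X n) :=
  ⟨fun z => z.1 n, (continuous_apply n).comp continuous_subtype_val⟩

/-- The map induced on homotopy groups (in particular on `π_k` for `N = Fin k`)
by a continuous map `f` with `f x = y`. -/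
def piMap {X Y : Type} [TopologicalSpace X] [TopologicalSpace Y] (N : Type)
    (f : C(X, Y)) {x : X} {y : Y} (hf : f x = y) :
    HomotopyGroup N X x → HomotopyGroup N Y y :=
  Quotient.map
    (fun g => (⟨f.comp g.1, fun q hq => by
        rw [ContinuousMap.comp_apply, g.2 q hq, hf]⟩ : GenLoop N Y y))
    (fun g h H => H.map fun F => F.compContinuousMap f)


/-- The map `π_k (lim_n X_n) → π_k (X n)` induced by the projection `TowerLim.proj n`,
for the basepoint `⟨x, hx⟩` of the inverse limit. -/
def piProjMap {X : ℕ → Type} [∀ n, TopologicalSpace (X n)] {p : ∀ n, C(X (n + 1), X n)}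
    (k : ℕ) {x : ∀ n, X n} (hx : ∀ n, p n (x (n + 1)) = x n) (n : ℕ) :
    HomotopyGroup (Fin k) (TowerLim X p) (⟨x, hx⟩ : TowerLim X p) →
      HomotopyGroup (Fin k) (X n) (x n) :=
  piMap (Fin k) (TowerLim.proj n) rfl

/-- The map `π_k (X (n+1)) → π_k (X n)` induced by the map `p n` of the tower. -/
def piTowerMap {X : ℕ → Type} [∀ n, TopologicalSpace (X n)] {p : ∀ n, C(X (n + 1), X n)}
    (k : ℕ) {x : ∀ n, X n} (hx : ∀ n, p n (x (n + 1)) = x n) (n : ℕ) :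
    HomotopyGroup (Fin k) (X (n + 1)) (x (n + 1)) → HomotopyGroup (Fin k) (X n) (x n) :=
  piMap (Fin k) (p n) (hx n)

/-- The distinguished basepoint of `HomotopyGroup N X x`: the class of the constant map. -/
def piConst {X : Type} [TopologicalSpace X] (N : Type) (x : X) : HomotopyGroup N X x :=
  ⟦GenLoop.const⟧

/-- The class in `HomotopyGroup N X x` of a generalized loop. -/
def piCls {N X : Type} [TopologicalSpace X] {x : X} (g : GenLoop N X x) :
    HomotopyGroup N X x :=
  ⟦g⟧

/-- The generalized loop obtained by composing a generalized loop with a continuous map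
`f` satisfying `f x = y`. -/
def genLoopMap {X Y : Type} [TopologicalSpace X] [TopologicalSpace Y] (N : Type)
    (f : C(X, Y)) {x : X} {y : Y} (hf : f x = y) (g : GenLoop N X x) : GenLoop N Y y :=
  ⟨f.comp g.1, fun q hq => by rw [ContinuousMap.comp_apply, g.2 q hq, hf]⟩

/-- `β : I^{k+1} → X` is a *nullhomotopy* of the generalized loop `α : I^k → X`
(writing points of `I^{k+1}` as `(p, t)` with `t` the last coordinate):
`β (p, 0) = x` for all `p`, `β (p, 1) = α p` for all `p`, and `β (p, t) = x`
for all `p ∈ ∂I^k`. -/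
def IsNullhomotopy {k : ℕ} {X : Type} [TopologicalSpace X] {x : X}
    (α : GenLoop (Fin k) X x) (β : C((Fin (k + 1) → I), X)) : Prop :=
  (∀ q : Fin (k + 1) → I, q (Fin.last k) = 0 → β q = x) ∧
  (∀ q : Fin (k + 1) → I, q (Fin.last k) = 1 → β q = α fun i => q i.castSucc) ∧
  (∀ q : Fin (k + 1) → I, (∃ i : Fin k, q i.castSucc = 0 ∨ q i.castSucc = 1) → β q = x)

/-- `c = β * (f ∘ β'⁻¹)` : the concatenation, in the last coordinate of the cube `I^{k+1}`,
of `β` with the reverse (in the last coordinate) of `f ∘ β'`. -/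
def IsGluedWithReverse {k : ℕ} {X Y : Type} [TopologicalSpace X] [TopologicalSpace Y]
    (β : C((Fin (k + 1) → I), X)) (f : C(Y, X)) (β' : C((Fin (k + 1) → I), Y))
    (c : (Fin (k + 1) → I) → X) : Prop :=
  ∀ q : Fin (k + 1) → I, c q =
    if (q (Fin.last k) : ℝ) ≤ 1 / 2 then
      β (Function.update q (Fin.last k)
        (Set.projIcc 0 1 zero_le_one (2 * (q (Fin.last k) : ℝ))))
    else
      f (β' (Function.update q (Fin.last k)
        (Set.projIcc 0 1 zero_le_one (2 - 2 * (q (Fin.last k) : ℝ)))))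

/-!
A path in `lim_n Ω^k X_n` is a homotopy relative to `∂I^k` between maps `I^k → lim_n X_n`, and
`Ω^k` of a Serre fibration is again a Serre fibration, because homotopies lift relative to the
bottom and the walls of a box. In the tower `Ω^k X_n` the nullhomotopies `β_n`, `β'_n` are paths
from the constant loop to `α_n`, `α'_n`. Let `g` witness that the two families
`[β_n][p β_{n+1}]⁻¹` and `[β'_n][p β'_{n+1}]⁻¹` are in the same `lim¹` orbit. The orbit relation
says exactly that the path classes `D_n = [β_n]⁻¹ g_n⁻¹ [β'_n]` from `α_n` to `α'_n` satisfy
`p D_{n+1} = D_n`. By path lifting they have representatives that are strictly compatible with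
the tower, which form a path from `α` to `α'` in the limit.
-/

section StoppedRetraction

variable {Z W : Type*} [TopologicalSpace Z] [TopologicalSpace W]

/-- `A` is a *stopped retract* of `Z` if every `z` is joined to a point of `A` by a path
`t ↦ r (t, z)`, starting in `A` and passing through `z` at a time `τ z`, where `τ` and `r` are
continuous and `τ` vanishes on `A`. This is the form in which homotopies are lifted relative
to `A`. -/
def IsStoppedRetract (A : Set Z) : Prop :=
  ∃ (τ : C(Z, I)) (r : C(I × Z, Z)),
    (∀ z, r (0, z) ∈ A) ∧ (∀ z, r (τ z, z) = z) ∧ ∀ z ∈ A, τ z = 0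

theorem IsStoppedRetract.univ_prod {A : Set Z} (hA : IsStoppedRetract A) :
    IsStoppedRetract ((Set.univ : Set W) ×ˢ A) := by
  obtain ⟨τ, r, hr₀, hrτ, hτ⟩ := hA
  exact ⟨⟨fun z => τ z.2, by fun_prop⟩, ⟨fun z => (z.2.1, r (z.1, z.2.2)), by fun_prop⟩,
    fun z => ⟨trivial, hr₀ z.2⟩, fun z => Prod.ext rfl (hrτ z.2), fun z hz => hτ z.2 hz.2⟩

/-- Lift the homotopy `(t, w) ↦ H (r (t, w))`, which starts in `A`, and evaluate the lift at the
stopping time. -/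
theorem IsSerreFibration.exists_lift {E B : Type} [TopologicalSpace E] [TopologicalSpace B]
    {p : C(E, B)} (hp : IsSerreFibration p) {n : ℕ} (e : Z ≃ₜ (Fin n → I)) {A : Set Z}
    (hA : IsStoppedRetract A) (H : C(Z, B)) (g : C(A, E)) (hg : ∀ z, p (g z) = H z) :
    ∃ G : C(Z, E), (∀ z, p (G z) = H z) ∧ ∀ z : A, G z = g z := by
  obtain ⟨τ, r, hr₀, hrτ, hτ⟩ := hA
  obtain ⟨L, hL₀, hL⟩ := hp n ⟨fun w => g ⟨r (0, e.symm w), hr₀ _⟩, by fun_prop⟩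
    ⟨fun z => H (r (z.1, e.symm z.2)), by fun_prop⟩ fun w => (hg ⟨_, hr₀ (e.symm w)⟩).symm
  refine ⟨⟨fun z => L (τ z, e z), by fun_prop⟩, fun z => ?_, fun z => ?_⟩
  · simp [hL, hrτ]
  · have hz : r (0, z) = z := by simpa only [hτ z z.2] using hrτ (z : Z)
    simp [hτ z z.2, hL₀, hz]

end StoppedRetraction

section OpenBox

variable {ι : Type*}

/-- The union of the bottom `{0} × I^ι` and the walls `I × ∂I^ι` of the box `I × I^ι`. -/
def openBox (ι : Type*) : Set (I × (ι → I)) :=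
  {z | z.1 = 0 ∨ z.2 ∈ Cube.boundary ι}

/-- The box `I × I^k` as a cube. -/
def boxHomeomorph (k : ℕ) : I × (Fin k → I) ≃ₜ (Fin (1 + k) → I) :=
  ((Homeomorph.funUnique (Fin 1) I).symm.prodCongr (Homeomorph.refl _)).trans
    (Fin.appendHomeomorph 1 k)

/-- The affine chart of the box `I × I^ι` that puts the origin above the centre of its top face
and its bottom and walls on the unit sphere of the sup norm. -/
def boxChart (z : I × (ι → I)) : ℝ × (ι → ℝ) :=
  (1 - z.1 / 2, fun i => 2 * z.2 i - 1)

/-- A continuous left inverse of `boxChart`, sending the whole unit sphere of the sup norm to the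
open box. -/
def boxFold (v : ℝ × (ι → ℝ)) : I × (ι → I) :=
  (Set.projIcc 0 1 zero_le_one (2 - 2 * |v.1|),
    fun i => Set.projIcc 0 1 zero_le_one ((v.2 i + 1) / 2))

theorem continuous_boxChart : Continuous (boxChart (ι := ι)) := by
  unfold boxChart
  fun_prop

theorem continuous_boxFold : Continuous (boxFold (ι := ι)) := by
  have := continuous_projIcc (a := (0 : ℝ)) (b := 1) (h := zero_le_one)
  unfold boxFold
  fun_prop

theorem boxFold_boxChart (z : I × (ι → I)) : boxFold (boxChart z) = z := by
  have h : |1 - (z.1 : ℝ) / 2| = 1 - z.1 / 2 := abs_of_nonneg (by linarith [z.1.2.2])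
  ext i <;> simp only [boxFold, boxChart, h]
  · rw [show 2 - 2 * (1 - (z.1 : ℝ) / 2) = z.1 by ring, Set.projIcc_val]
  · rw [show (2 * (z.2 i : ℝ) - 1 + 1) / 2 = z.2 i by ring, Set.projIcc_val]

section Norm

variable [Fintype ι]

theorem exists_norm_apply_eq_pi_norm {G : ι → Type*} [∀ i, SeminormedAddGroup (G i)]
    {v : ∀ i, G i} (hv : 0 < ‖v‖) : ∃ i, ‖v i‖ = ‖v‖ := by
  by_contra! h
  exact ((pi_norm_lt_iff hv).2 fun i => (norm_le_pi_norm v i).lt_of_ne (h i)).false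

theorem boxFold_mem_openBox {v : ℝ × (ι → ℝ)} (hv : ‖v‖ = 1) : boxFold v ∈ openBox ι := by
  rcases max_choice ‖v.1‖ ‖v.2‖ with h | h <;> rw [← Prod.norm_def, hv] at h
  · exact Or.inl (by simp [boxFold, ← Real.norm_eq_abs, ← h])
  · obtain ⟨i, hi⟩ := exists_norm_apply_eq_pi_norm (v := v.2) (h ▸ one_pos)
    rw [← h, Real.norm_eq_abs] at hi
    refine Or.inr ⟨i, ?_⟩
    rcases eq_or_eq_neg_of_abs_eq hi with hi | hi <;> simp [boxFold, hi]

theorem norm_boxChart_le_one (z : I × (ι → I)) : ‖boxChart z‖ ≤ 1 := by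
  refine max_le ?_ ((pi_norm_le_iff_of_nonneg zero_le_one).2 fun i => ?_) <;>
    simp only [boxChart, Real.norm_eq_abs, abs_le]
  · constructor <;> linarith [z.1.2.1, z.1.2.2]
  · constructor <;> linarith [(z.2 i).2.1, (z.2 i).2.2]

theorem norm_boxChart_pos (z : I × (ι → I)) : 0 < ‖boxChart z‖ := by
  refine norm_pos_iff.2 fun h => ?_
  have : 1 - (z.1 : ℝ) / 2 = 0 := congrArg Prod.fst h
  linarith [z.1.2.2]

theorem norm_boxChart_of_mem_openBox {z : I × (ι → I)} (hz : z ∈ openBox ι) :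
    ‖boxChart z‖ = 1 := by
  refine le_antisymm (norm_boxChart_le_one z) ?_
  rcases hz with hz | ⟨i, hi⟩
  · refine le_of_eq_of_le ?_ (norm_fst_le _)
    simp [boxChart, hz]
  · refine le_of_eq_of_le ?_ ((norm_le_pi_norm _ i).trans (norm_snd_le _))
    rcases hi with hi | hi <;> norm_num [boxChart, hi]

end Norm

/-- The path through `z` runs along the ray from the origin of the chart. -/
theorem isStoppedRetract_openBox [Finite ι] : IsStoppedRetract (openBox ι) := by
  cases nonempty_fintype ι
  have hchart := continuous_boxChart (ι := ι)
  have hpos (w : I × I × (ι → I)) : 0 < ‖boxChart w.2‖ + w.1 :=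
    add_pos_of_pos_of_nonneg (norm_boxChart_pos w.2) w.1.2.1
  have hinv : Continuous fun w : I × I × (ι → I) => (‖boxChart w.2‖ + (w.1 : ℝ))⁻¹ :=
    Continuous.inv₀ (by fun_prop) fun w => (hpos w).ne'
  let τ : C(I × (ι → I), I) :=
    ⟨fun z => ⟨1 - ‖boxChart z‖, by linarith [norm_boxChart_le_one z],
      by linarith [norm_boxChart_pos z]⟩, by fun_prop⟩
  let r : C(I × I × (ι → I), I × (ι → I)) :=
    ⟨fun w => boxFold ((‖boxChart w.2‖ + w.1)⁻¹ • boxChart w.2),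
      continuous_boxFold.comp (by fun_prop)⟩
  refine ⟨τ, r, fun z => boxFold_mem_openBox ?_, fun z => ?_, fun z hz => ?_⟩
  · simp [norm_smul, (norm_boxChart_pos z).ne']
  · simp [τ, r, boxFold_boxChart]
  · simp [τ, norm_boxChart_of_mem_openBox hz]

end OpenBox

section GenLoop

variable {N P X : Type*} [TopologicalSpace P] [TopologicalSpace X] {x : X}

/-- Bundle a map that takes the value `x` on the walls `P × ∂I^N` as a continuous family of
generalized loops with parameters in `P`. -/
def genLoopCurry (F : C(P × (N → I), X))
    (hF : ∀ s, ∀ u ∈ Cube.boundary N, F (s, u) = x) : C(P, GenLoop N X x) :=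
  ⟨fun s => ⟨F.curry s, hF s⟩, F.curry.continuous.subtype_mk _⟩

theorem genLoop_homotopic_of_joined {a b : GenLoop N X x} (h : Joined a b) :
    GenLoop.Homotopic a b := by
  obtain ⟨γ⟩ := h
  exact ⟨⟨⟨⟨fun z => γ z.1 z.2, by fun_prop⟩, fun u => by simp, fun u => by simp⟩,
    fun t u hu => ((γ t).2 u hu).trans (a.2 u hu).symm⟩⟩

end GenLoop

section LoopedFibration

variable {N X Y : Type} [TopologicalSpace X] [TopologicalSpace Y] {x : X} {y : Y}

/-- Composition with a pointed map as a continuous map of spaces of generalized loops. -/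
def genLoopContinuousMap (N : Type) (f : C(X, Y)) (hf : f x = y) :
    C(GenLoop N X x, GenLoop N Y y) :=
  ⟨genLoopMap N f hf,
    ((ContinuousMap.continuous_postcomp f).comp continuous_subtype_val).subtype_mk _⟩

theorem genLoopContinuousMap_const (f : C(X, Y)) (hf : f x = y) :
    genLoopContinuousMap N f hf GenLoop.const = GenLoop.const := by
  ext
  exact hf

theorem IsSerreFibration.genLoopContinuousMap {p : C(X, Y)} (hp : IsSerreFibration p)
    (hxy : p x = y) (k : ℕ) : IsSerreFibration (genLoopContinuousMap (Fin k) p hxy) := by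
  intro j f H hfH
  let e : (Fin j → I) × (I × (Fin k → I)) ≃ₜ (Fin (j + (1 + k)) → I) :=
    ((Homeomorph.refl _).prodCongr (boxHomeomorph k)).trans (Fin.appendHomeomorph j (1 + k))
  obtain ⟨G, hG, hGf⟩ := hp.exists_lift e (isStoppedRetract_openBox (ι := Fin k)).univ_prod
    ⟨fun z => H (z.2.1, z.1) z.2.2, by fun_prop⟩ ⟨fun z => f z.1.1 z.1.2.2, by fun_prop⟩ (by
      rintro ⟨⟨q, s, u⟩, -, hs | hu⟩
      · obtain rfl : s = 0 := hs
        exact congrArg (fun γ => γ u) (hfH q).symm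
      · exact (congrArg p ((f q).2 u hu)).trans (hxy.trans ((H (s, q)).2 u hu).symm))
  refine ⟨genLoopCurry ⟨fun z => G (z.1.2, z.1.1, z.2), by fun_prop⟩ fun z u hu =>
    (hGf ⟨(z.2, z.1, u), trivial, Or.inr hu⟩).trans ((f z.2).2 u hu), fun q => ?_, fun z => ?_⟩
  · ext u
    exact hGf ⟨(q, 0, u), trivial, Or.inl rfl⟩
  · ext u
    exact hG (z.2, z.1, u)

end LoopedFibration

section PathLifting

variable {W Z : Type*} [TopologicalSpace W] [TopologicalSpace Z] {a b c : W} {a' b' c' : Z}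

/-- The image of a homotopy class of paths under a continuous map, with the endpoints of the
image replaced by propositionally equal points. -/
def mapPathClass (f : C(W, Z)) (ha : f a = a') (hb : f b = b')
    (D : Path.Homotopic.Quotient a b) : Path.Homotopic.Quotient a' b' :=
  (D.map f).cast ha.symm hb.symm

theorem mapPathClass_trans (f : C(W, Z)) (ha : f a = a') (hb : f b = b') (hc : f c = c')
    (D : Path.Homotopic.Quotient a b) (D' : Path.Homotopic.Quotient b c) :
    mapPathClass f ha hc (D.trans D') =
      (mapPathClass f ha hb D).trans (mapPathClass f hb hc D') := by
  subst ha hb hc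
  induction D using Path.Homotopic.Quotient.ind
  induction D' using Path.Homotopic.Quotient.ind
  simp [mapPathClass, ← Path.Homotopic.Quotient.mk_trans, ← Path.Homotopic.Quotient.mk_map]

theorem mapPathClass_symm (f : C(W, Z)) (ha : f a = a') (hb : f b = b')
    (D : Path.Homotopic.Quotient a b) :
    mapPathClass f hb ha D.symm = (mapPathClass f ha hb D).symm := by
  subst ha hb
  induction D using Path.Homotopic.Quotient.ind
  rfl

theorem IsSerreFibration.exists_path_lift {E B : Type} [TopologicalSpace E] [TopologicalSpace B]
    {p : C(E, B)} (hp : IsSerreFibration p) {a b : E} {a' b' : B} (ha : p a = a') (hb : p b = b')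
    (D : Path.Homotopic.Quotient a b) (δ : Path a' b') (hD : mapPathClass p ha hb D = .mk δ) :
    ∃ ε : Path a b, .mk ε = D ∧ ∀ t, p (ε t) = δ t := by
  subst ha hb
  obtain ⟨γ, rfl⟩ := Path.Homotopic.Quotient.mk_surjective D
  obtain ⟨K⟩ := Path.Homotopic.Quotient.exact hD
  obtain ⟨G, hG, hGγ⟩ := hp.exists_lift (boxHomeomorph 1) isStoppedRetract_openBox
    ⟨fun z => K (z.1, z.2 0), by fun_prop⟩ ⟨fun z => γ (z.1.2 0), by fun_prop⟩ (by
      rintro ⟨⟨s, u⟩, hs | ⟨i, hi⟩⟩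
      · obtain rfl : s = 0 := hs
        exact (K.apply_zero (u 0)).symm
      · obtain rfl : i = 0 := Subsingleton.elim i 0
        exact (K.eq_fst s hi).symm)
  have hG₀ (t : I) : G (0, fun _ => t) = γ t := hGγ ⟨(0, fun _ => t), Or.inl rfl⟩
  have hGend (s t : I) (ht : t = 0 ∨ t = 1) : G (s, fun _ => t) = γ t :=
    hGγ ⟨(s, fun _ => t), Or.inr ⟨0, ht⟩⟩
  refine ⟨⟨⟨fun t => G (1, fun _ => t), by fun_prop⟩, ?_, ?_⟩, ?_, fun t => ?_⟩
  · simpa using hGend 1 0 (Or.inl rfl)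
  · simpa using hGend 1 1 (Or.inr rfl)
  · exact (Path.Homotopic.Quotient.eq.2 ⟨⟨⟨⟨fun z => G (z.1, fun _ => z.2), by fun_prop⟩,
      hG₀, fun t => rfl⟩, fun s t ht => hGend s t ht⟩⟩).symm
  · exact (hG (1, fun _ => t)).trans (K.apply_one t)

end PathLifting

open CategoryTheory in
theorem groupoid_inv_comp_inv_comp_eq {C : Type*} [Groupoid C] {z a a' : C}
    {B b : z ⟶ a} {B' b' : z ⟶ a'} {g γ : z ⟶ z}
    (h : B' ≫ Groupoid.inv b' = g ≫ (B ≫ Groupoid.inv b) ≫ Groupoid.inv γ) :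
    Groupoid.inv b ≫ Groupoid.inv γ ≫ b' = Groupoid.inv B ≫ Groupoid.inv g ≫ B' := by
  have hB' : B' = (g ≫ (B ≫ Groupoid.inv b) ≫ Groupoid.inv γ) ≫ b' := by
    rw [← h]
    simp
  simp [hB']

section Tower

variable {Z : ℕ → Type} [∀ n, TopologicalSpace (Z n)] {φ : ∀ n, C(Z (n + 1), Z n)}
  {z a a' : TowerLim Z φ}

/-- Representatives that are strictly compatible with the tower are chosen one after the other,
each lifting the previous one. -/
theorem TowerLim.joined_of_pathClasses (hφ : ∀ n, IsSerreFibration (φ n))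
    (D : ∀ n, Path.Homotopic.Quotient (a.1 n) (a'.1 n))
    (hD : ∀ n, mapPathClass (φ n) (a.2 n) (a'.2 n) (D (n + 1)) = D n) : Joined a a' := by
  have hlift (n : ℕ) (δ : {δ : Path (a.1 n) (a'.1 n) // .mk δ = D n}) :
      ∃ ε : {ε : Path (a.1 (n + 1)) (a'.1 (n + 1)) // .mk ε = D (n + 1)},
        ∀ t, φ n (ε.1 t) = δ.1 t := by
    obtain ⟨ε, hεD, hε⟩ :=
      (hφ n).exists_path_lift (a.2 n) (a'.2 n) (D (n + 1)) δ.1 ((hD n).trans δ.2.symm)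
    exact ⟨⟨ε, hεD⟩, hε⟩
  choose lift hlift using hlift
  obtain ⟨δ₀, hδ₀⟩ := Path.Homotopic.Quotient.mk_surjective (D 0)
  let δ (n : ℕ) : {δ : Path (a.1 n) (a'.1 n) // .mk δ = D n} := n.rec ⟨δ₀, hδ₀⟩ lift
  refine ⟨⟨⟨fun t => ⟨fun n => (δ n).1 t, fun n => hlift n (δ n) t⟩, ?_⟩, ?_, ?_⟩⟩
  · exact (continuous_pi fun n => (δ n).1.continuous).subtype_mk _
  · exact Subtype.ext (funext fun n => (δ n).1.source)
  · exact Subtype.ext (funext fun n => (δ n).1.target)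

/-- The failure of a family of path classes `B n` from `z n` to `a n` to be compatible with the
maps of the tower, as a family of classes of loops; its orbit is the `lim¹` class of `a`. -/
def TowerLim.defect (B : ∀ n, Path.Homotopic.Quotient (z.1 n) (a.1 n)) (n : ℕ) :
    Path.Homotopic.Quotient (z.1 n) (z.1 n) :=
  (B n).trans (mapPathClass (φ n) (z.2 n) (a.2 n) (B (n + 1))).symm

theorem TowerLim.joined_of_defect_eq (hφ : ∀ n, IsSerreFibration (φ n))
    (B : ∀ n, Path.Homotopic.Quotient (z.1 n) (a.1 n))
    (B' : ∀ n, Path.Homotopic.Quotient (z.1 n) (a'.1 n))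
    (g : ∀ n, Path.Homotopic.Quotient (z.1 n) (z.1 n))
    (hg : ∀ n, TowerLim.defect B' n = (g n).trans ((TowerLim.defect B n).trans
      (mapPathClass (φ n) (z.2 n) (z.2 n) (g (n + 1))).symm)) : Joined a a' := by
  refine TowerLim.joined_of_pathClasses hφ
    (fun n => (B n).symm.trans ((g n).symm.trans (B' n))) fun n => ?_
  simp only [mapPathClass_trans _ _ (z.2 n), mapPathClass_symm]
  exact groupoid_inv_comp_inv_comp_eq (C := FundamentalGroupoid (Z n)) (z := ⟨z.1 n⟩)
    (a := ⟨a.1 n⟩) (a' := ⟨a'.1 n⟩) (hg n)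

end Tower

section LoopClass

variable {k : ℕ} {X : Type*} [TopologicalSpace X] {x : X}

/-- A generalized loop of dimension `k + 1` as a loop, parametrized by the last coordinate, of
generalized loops of dimension `k`. -/
def lastLoop (c : GenLoop (Fin (k + 1)) X x) :
    Path (GenLoop.const : GenLoop (Fin k) X x) GenLoop.const :=
  (GenLoop.toLoop (Fin.last k) c).map
    (GenLoop.congr x (finSuccAboveEquiv (Fin.last k)).symm).continuous

theorem lastLoop_apply_apply (c : GenLoop (Fin (k + 1)) X x) (t : I) (u : Fin k → I) :
    lastLoop c t u = c (Fin.snoc (α := fun _ => I) u t) := by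
  refine congrArg c (funext fun j => ?_)
  induction j using Fin.lastCases with
  | last => simp
  | cast i => simp [finSuccAboveEquiv_symm_apply_last]

theorem lastLoop_transAt (c d : GenLoop (Fin (k + 1)) X x) :
    lastLoop (GenLoop.transAt (Fin.last k) c d) = (lastLoop c).trans (lastLoop d) := by
  rw [lastLoop, ← GenLoop.fromLoop_trans_toLoop, GenLoop.to_from]
  exact Path.map_trans _ _ _

theorem lastLoop_symmAt (c : GenLoop (Fin (k + 1)) X x) :
    lastLoop (GenLoop.symmAt (Fin.last k) c) = (lastLoop c).symm := by
  rw [lastLoop, ← GenLoop.fromLoop_symm_toLoop, GenLoop.to_from]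
  rfl

/-- The class of `lastLoop` as a function of an element of `π_{k+1}`. It reverses products
because of Mathlib's convention for the product in `HomotopyGroup`. -/
def lastLoopClass : HomotopyGroup (Fin (k + 1)) X x →
    Path.Homotopic.Quotient (GenLoop.const : GenLoop (Fin k) X x) GenLoop.const :=
  Quotient.lift (fun c => .mk (lastLoop c)) fun _ _ h =>
    Path.Homotopic.Quotient.eq.2 ((GenLoop.homotopicTo (Fin.last k) h).map
      ⟨_, (GenLoop.congr x (finSuccAboveEquiv (Fin.last k)).symm).continuous⟩)

theorem lastLoopClass_mul (a b : HomotopyGroup (Fin (k + 1)) X x) :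
    lastLoopClass (a * b) = (lastLoopClass b).trans (lastLoopClass a) := by
  obtain ⟨c, rfl⟩ := Quotient.exists_rep a
  obtain ⟨d, rfl⟩ := Quotient.exists_rep b
  refine (congrArg lastLoopClass (HomotopyGroup.mul_spec (i := Fin.last k))).trans ?_
  exact congrArg Path.Homotopic.Quotient.mk (lastLoop_transAt d c)

theorem lastLoopClass_inv (a : HomotopyGroup (Fin (k + 1)) X x) :
    lastLoopClass a⁻¹ = (lastLoopClass a).symm := by
  obtain ⟨c, rfl⟩ := Quotient.exists_rep a
  refine (congrArg lastLoopClass (HomotopyGroup.inv_spec (i := Fin.last k))).trans ?_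
  exact congrArg Path.Homotopic.Quotient.mk (lastLoop_symmAt c)

theorem lastLoopClass_piMap {X Y : Type} [TopologicalSpace X] [TopologicalSpace Y] {x : X} {y : Y}
    (f : C(X, Y)) (hf : f x = y) (a : HomotopyGroup (Fin (k + 1)) X x) :
    lastLoopClass (piMap (Fin (k + 1)) f hf a) =
      mapPathClass (genLoopContinuousMap (Fin k) f hf) (genLoopContinuousMap_const f hf)
        (genLoopContinuousMap_const f hf) (lastLoopClass a) := by
  obtain ⟨c, rfl⟩ := Quotient.exists_rep a
  rfl

end LoopClass

section Nullhomotopy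

variable {k : ℕ} {X Y : Type} [TopologicalSpace X] [TopologicalSpace Y] {x : X} {y : Y}

/-- A nullhomotopy of `α` as a path in the space of generalized loops. -/
def IsNullhomotopy.toPath {α : GenLoop (Fin k) X x} {β : C((Fin (k + 1) → I), X)}
    (hβ : IsNullhomotopy α β) : Path GenLoop.const α where
  toContinuousMap := genLoopCurry
    ⟨fun z => β (Fin.snoc (α := fun _ => I) z.2 z.1),
      β.continuous.comp (Continuous.finSnoc (A := fun _ => I) continuous_snd continuous_fst)⟩
    fun t u ⟨i, hi⟩ => hβ.2.2 _ ⟨i, by simpa using hi⟩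
  source' := by
    ext u
    exact hβ.1 _ (by simp)
  target' := by
    ext u
    exact (hβ.2.1 _ (by simp)).trans (by simp)

theorem IsGluedWithReverse.lastLoopClass_eq {α : GenLoop (Fin k) X x} {α' : GenLoop (Fin k) Y y}
    {β : C((Fin (k + 1) → I), X)} {β' : C((Fin (k + 1) → I), Y)} {f : C(Y, X)}
    {c : GenLoop (Fin (k + 1)) X x} (hc : IsGluedWithReverse β f β' c)
    (hβ : IsNullhomotopy α β) (hβ' : IsNullhomotopy α' β') (hf : f y = x)
    (hα : genLoopContinuousMap (Fin k) f hf α' = α) :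
    lastLoopClass (piCls c) = Path.Homotopic.Quotient.trans (.mk hβ.toPath)
      (mapPathClass (genLoopContinuousMap (Fin k) f hf) (genLoopContinuousMap_const f hf) hα
        (.mk hβ'.toPath)).symm := by
  refine congrArg Path.Homotopic.Quotient.mk (?_ : lastLoop c = hβ.toPath.trans
    ((hβ'.toPath.map (genLoopContinuousMap (Fin k) f hf).continuous).cast
      (genLoopContinuousMap_const f hf).symm hα.symm).symm)
  ext t u
  rw [lastLoop_apply_apply, hc, Path.trans_apply]
  simp only [Fin.snoc_last, Fin.update_snoc_last]
  split_ifs with ht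
  · change _ = β _
    rw [Set.projIcc_of_mem]
  · change _ = f (β' _)
    rw [Set.projIcc_of_mem zero_le_one ⟨by linarith [t.2.2], by linarith⟩]
    congr 3
    ext
    simp only [unitInterval.coe_symm_eq]
    ring

end Nullhomotopy

section LoopsOfLimit

variable {N : Type} {X : ℕ → Type} [∀ n, TopologicalSpace (X n)] {p : ∀ n, C(X (n + 1), X n)}
  {x : ∀ n, X n} {hx : ∀ n, p n (x (n + 1)) = x n}

/-- The tower of spaces of generalized loops. -/
abbrev loopTower (N : Type) (hx : ∀ n, p n (x (n + 1)) = x n) (n : ℕ) :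
    C(GenLoop N (X (n + 1)) (x (n + 1)), GenLoop N (X n) (x n)) :=
  genLoopContinuousMap N (p n) (hx n)

/-- The components of a generalized loop in the inverse limit, as a point of the inverse limit of
the spaces of generalized loops. -/
def genLoopComponents (α : GenLoop N (TowerLim X p) ⟨x, hx⟩) :
    TowerLim (fun n => GenLoop N (X n) (x n)) (loopTower N hx) :=
  ⟨fun n => genLoopMap N (TowerLim.proj n) rfl α, fun n => by
    ext u
    exact (α.1 u).2 n⟩

/-- The generalized loop in the inverse limit with given components. -/
def genLoopOfComponents :
    C(TowerLim (fun n => GenLoop N (X n) (x n)) (loopTower N hx),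
      GenLoop N (TowerLim X p) ⟨x, hx⟩) :=
  genLoopCurry
    ⟨fun z => ⟨fun n => TowerLim.proj n z.1 z.2, fun n => congrArg (fun γ => γ z.2) (z.1.2 n)⟩,
      (continuous_pi fun n => by fun_prop).subtype_mk _⟩
    fun a u hu => Subtype.ext (funext fun n => (a.1 n).2 u hu)

theorem genLoopOfComponents_genLoopComponents (α : GenLoop N (TowerLim X p) ⟨x, hx⟩) :
    genLoopOfComponents (genLoopComponents α) = α :=
  rfl

theorem TowerLim.defect_toPath_eq {k : ℕ} {α : GenLoop (Fin k) (TowerLim X p) ⟨x, hx⟩}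
    {β : ∀ n, C((Fin (k + 1) → I), X n)}
    (hβ : ∀ n, IsNullhomotopy (genLoopMap (Fin k) (TowerLim.proj n) rfl α) (β n))
    {n : ℕ} {c : GenLoop (Fin (k + 1)) (X n) (x n)}
    (hc : IsGluedWithReverse (β n) (p n) (β (n + 1)) c) :
    TowerLim.defect (z := genLoopComponents GenLoop.const) (a := genLoopComponents α)
      (fun n => .mk (hβ n).toPath) n = lastLoopClass (piCls c) :=
  (hc.lastLoopClass_eq (hβ n) (hβ (n + 1)) (hx n) ((genLoopComponents α).2 n)).symm

end LoopsOfLimit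

/-- **Proposition 4.7 (`φ̃` is injective).**  Let `(X n, p n)` be a tower of fibrations of
pointed topological spaces, with basepoints the components `x n` of a chosen point of the
inverse limit, and let `k ≥ 0`.  Then `φ̃ : Ker P → lim¹_n π_{k+1} X_n` is injective: if
`α, ᾱ : I^k → lim_n X_n` send `∂I^k` to the basepoint, their classes lie in the kernel of
`P : π_k (lim_n X_n) → lim_n π_k X_n`, and `φ̃([α]) = φ̃([ᾱ])` — i.e. for some (equivalently,
by Proposition 4.3, any) choices of families of nullhomotopies `β`, `β̄` of their
projections, the glued families `([β_n * (p_{n+1} ∘ β_{n+1}⁻¹)])_n` and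
`([β̄_n * (p_{n+1} ∘ β̄_{n+1}⁻¹)])_n` lie in the same `lim¹`-orbit — then `α` and `ᾱ` are
homotopic relative to `∂I^k`, i.e. `[α] = [ᾱ]` in `π_k (lim_n X_n)`. -/
theorem phiTilde_injective
    (X : ℕ → Type) [∀ n, TopologicalSpace (X n)] (p : ∀ n, C(X (n + 1), X n))
    (hfib : ∀ n, IsSerreFibration (p n))
    (x : ∀ n, X n) (hx : ∀ n, p n (x (n + 1)) = x n)
    (k : ℕ)
    (α α' : GenLoop (Fin k) (TowerLim X p) (⟨x, hx⟩ : TowerLim X p))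
    (hker : ∀ n, piProjMap k hx n (piCls α) = piConst (Fin k) (x n))
    (hker' : ∀ n, piProjMap k hx n (piCls α') = piConst (Fin k) (x n))
    (β β' : ∀ n, C((Fin (k + 1) → I), X n))
    (hβ : ∀ n, IsNullhomotopy (genLoopMap (Fin k) (TowerLim.proj n) rfl α) (β n))
    (hβ' : ∀ n, IsNullhomotopy (genLoopMap (Fin k) (TowerLim.proj n) rfl α') (β' n))
    (c c' : ∀ n, GenLoop (Fin (k + 1)) (X n) (x n))
    (hc : ∀ n, IsGluedWithReverse (β n) (p n) (β (n + 1)) (c n))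
    (hc' : ∀ n, IsGluedWithReverse (β' n) (p n) (β' (n + 1)) (c' n))
    (horbit : ∃ g : ∀ n, HomotopyGroup (Fin (k + 1)) (X n) (x n),
      ∀ n, piCls (c' n)
        = (piTowerMap (k + 1) hx n (g (n + 1)))⁻¹ * piCls (c n) * g n) :
    GenLoop.Homotopic α α' := by
  obtain ⟨g, hg⟩ := horbit
  have hjoined : Joined (genLoopComponents α) (genLoopComponents α') := by
    refine TowerLim.joined_of_defect_eq (fun n => (hfib n).genLoopContinuousMap (hx n) k)
      (z := genLoopComponents GenLoop.const) (fun n => .mk (hβ n).toPath)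
      (fun n => .mk (hβ' n).toPath) (fun n => lastLoopClass (g n)) fun n => ?_
    rw [TowerLim.defect_toPath_eq hβ (hc n), TowerLim.defect_toPath_eq hβ' (hc' n), hg n,
      lastLoopClass_mul, lastLoopClass_mul, lastLoopClass_inv, piTowerMap, lastLoopClass_piMap]
    rfl
  have hjoined' : Joined α α' := by
    simpa only [genLoopOfComponents_genLoopComponents] using
      hjoined.map genLoopOfComponents.continuous
  exact genLoop_homotopic_of_joined hjoined'

end
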